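/- Let 0<p<1 and let (x_n)_{n∈ℕ} together with (x_n*)_{n∈ℕ} be a quasi-greedy basis of ℓ_p. Then the coefficient transform maps ℓ_p boundedly into ℓ_1: there is a constant C such that Σ_n |x_n*(f)| ≤ C‖f‖_p for every f ∈ ℓ_p. -/

import Mathlib

open scoped BigOperators

open scoped BigOperators

/-- For `0 < p < 1`, membership in `ℓ_p`: the sequence `(|f j|^p)_j` is summable. -/
def MemLpSeq (p : ℝ) (f : ℕ → ℝ) : Prop := Summable fun j => |f j| ^ p

/-- The `p`-norm `‖f‖_p = (∑_j |f j|^p)^(1/p)`. -/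
noncomputable def pNorm (p : ℝ) (f : ℕ → ℝ) : ℝ := (∑' j, |f j| ^ p) ^ (1 / p)

/-- `A` is a greedy set for the coefficient sequence `coef`. -/
def GreedySet (coef : ℕ → ℝ) (A : Finset ℕ) : Prop :=
  ∀ n ∈ A, ∀ k ∉ A, |coef k| ≤ |coef n|

/-- `(x_n)` together with bounded linear functionals `(x_n^*)` is a basis of `ℓ_p`. -/
structure IsLpBasis (p : ℝ) (x : ℕ → ℕ → ℝ) (xs : ℕ → (ℕ → ℝ) → ℝ) : Prop where
  mem : ∀ n, MemLpSeq p (x n)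
  map_add : ∀ n f g, MemLpSeq p f → MemLpSeq p g → xs n (f + g) = xs n f + xs n g
  map_smul : ∀ n (c : ℝ) (f : ℕ → ℝ), MemLpSeq p f → xs n (fun j => c * f j) = c * xs n f
  bdd : ∃ b : ℝ, ∀ n f, MemLpSeq p f → |xs n f| ≤ b * pNorm p f
  biorth : ∀ m n, xs m (x n) = if m = n then (1 : ℝ) else 0
  dense : ∀ f, MemLpSeq p f → ∀ ε > 0, ∃ (A : Finset ℕ) (c : ℕ → ℝ),
    pNorm p (fun j => f j - ∑ n ∈ A, c n * x n j) < ε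
  norm_lb : ∃ c > 0, ∀ n, c ≤ pNorm p (x n)
  norm_ub : ∃ C : ℝ, ∀ n, pNorm p (x n) ≤ C

/-- The basis is quasi-greedy: greedy projections are uniformly bounded. -/
def QuasiGreedy (p : ℝ) (x : ℕ → ℕ → ℝ) (xs : ℕ → (ℕ → ℝ) → ℝ) : Prop :=
  ∃ C ≥ (1 : ℝ), ∀ f, MemLpSeq p f → ∀ A : Finset ℕ,
    GreedySet (fun n => xs n f) A →
    pNorm p (fun j => ∑ n ∈ A, xs n f * x n j) ≤ C * pNorm p f


noncomputable def qn (p : ℝ) (f : ℕ → ℝ) : ℝ := ∑' j, |f j| ^ p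

lemma qn_nonneg (p : ℝ) (f : ℕ → ℝ) : 0 ≤ qn p f :=
  tsum_nonneg fun _ => Real.rpow_nonneg (abs_nonneg _) _

lemma pNorm_nonneg (p : ℝ) (f : ℕ → ℝ) : 0 ≤ pNorm p f := Real.rpow_nonneg (qn_nonneg p f) _

lemma pNorm_eq (p : ℝ) (f : ℕ → ℝ) : pNorm p f = qn p f ^ (1 / p) := rfl

lemma pNorm_rpow {p : ℝ} (hp0 : 0 < p) (f : ℕ → ℝ) : pNorm p f ^ p = qn p f := by
  rw [pNorm_eq, ← Real.rpow_mul (qn_nonneg p f), one_div_mul_cancel hp0.ne', Real.rpow_one]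

lemma abs_rpow_add_le {p : ℝ} (hp0 : 0 < p) (hp1 : p < 1) (a b : ℝ) :
    |a + b| ^ p ≤ |a| ^ p + |b| ^ p :=
  (Real.rpow_le_rpow (abs_nonneg _) (abs_add_le a b) hp0.le).trans
    (Real.rpow_add_le_add_rpow (abs_nonneg _) (abs_nonneg _) hp0.le hp1.le)

lemma mem_add {p : ℝ} (hp0 : 0 < p) (hp1 : p < 1) {f g : ℕ → ℝ} (hf : MemLpSeq p f)
    (hg : MemLpSeq p g) : MemLpSeq p (fun j => f j + g j) :=
  Summable.of_nonneg_of_le (fun _ => Real.rpow_nonneg (abs_nonneg _) _)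
    (fun j => abs_rpow_add_le hp0 hp1 (f j) (g j)) (Summable.add hf hg)

lemma qn_add_le {p : ℝ} (hp0 : 0 < p) (hp1 : p < 1) {f g : ℕ → ℝ} (hf : MemLpSeq p f)
    (hg : MemLpSeq p g) : qn p (fun j => f j + g j) ≤ qn p f + qn p g := by
  unfold qn
  rw [← Summable.tsum_add hf hg]
  exact Summable.tsum_le_tsum (fun j => abs_rpow_add_le hp0 hp1 (f j) (g j))
    (mem_add hp0 hp1 hf hg) (Summable.add hf hg)

lemma mem_smul {p : ℝ} {f : ℕ → ℝ} (c : ℝ) (hf : MemLpSeq p f) :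
    MemLpSeq p (fun j => c * f j) := by
  unfold MemLpSeq at *
  simp_rw [abs_mul, Real.mul_rpow (abs_nonneg _) (abs_nonneg _)]
  exact hf.mul_left _

lemma qn_smul (p : ℝ) (f : ℕ → ℝ) (c : ℝ) :
    qn p (fun j => c * f j) = |c| ^ p * qn p f := by
  unfold qn
  simp_rw [abs_mul, Real.mul_rpow (abs_nonneg _) (abs_nonneg _)]
  exact tsum_mul_left

lemma mem_zero {p : ℝ} (hp0 : 0 < p) : MemLpSeq p (fun _ => 0) := by
  unfold MemLpSeq; simp [Real.zero_rpow hp0.ne', summable_zero]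

lemma qn_zero {p : ℝ} (hp0 : 0 < p) : qn p (fun _ => 0) = 0 := by
  unfold qn; simp [Real.zero_rpow hp0.ne']

lemma mem_sum {p : ℝ} (hp0 : 0 < p) (hp1 : p < 1) {x : ℕ → ℕ → ℝ} (hx : ∀ n, MemLpSeq p (x n))
    (c : ℕ → ℝ) (A : Finset ℕ) : MemLpSeq p (fun j => ∑ n ∈ A, c n * x n j) := by
  induction A using Finset.induction_on with
  | empty => simpa using mem_zero hp0
  | insert a A ha ih =>
    simp_rw [Finset.sum_insert ha]
    exact mem_add hp0 hp1 (mem_smul _ (hx a)) ih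

lemma qn_sum_le {p : ℝ} (hp0 : 0 < p) (hp1 : p < 1) {x : ℕ → ℕ → ℝ} (hx : ∀ n, MemLpSeq p (x n))
    (c : ℕ → ℝ) (A : Finset ℕ) :
    qn p (fun j => ∑ n ∈ A, c n * x n j) ≤ ∑ n ∈ A, |c n| ^ p * qn p (x n) := by
  induction A using Finset.induction_on with
  | empty => simp [qn_zero hp0]
  | insert a A ha ih =>
    simp_rw [Finset.sum_insert ha]
    refine (qn_add_le hp0 hp1 (mem_smul _ (hx a)) (mem_sum hp0 hp1 hx c A)).trans ?_
    rw [qn_smul]; linarith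

lemma abs_le_pNorm {p : ℝ} (hp0 : 0 < p) {f : ℕ → ℝ} (hf : MemLpSeq p f) (j : ℕ) :
    |f j| ≤ pNorm p f := by
  have h : |f j| ^ p ≤ qn p f :=
    hf.le_tsum j (fun _ _ => Real.rpow_nonneg (abs_nonneg _) _)
  calc |f j| = (|f j| ^ p) ^ (1 / p) := by
        rw [← Real.rpow_mul (abs_nonneg _), mul_one_div_cancel hp0.ne', Real.rpow_one]
    _ ≤ _ := by
        rw [pNorm_eq]
        exact Real.rpow_le_rpow (Real.rpow_nonneg (abs_nonneg _) _) h (by positivity)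

lemma abs_le_rpow_mul {p : ℝ} (hp1 : p < 1) {u N : ℝ} (h : |u| ≤ N) :
    |u| ≤ N ^ (1 - p) * |u| ^ p := by
  calc |u| = |u| ^ (1 - p) * |u| ^ p := by
        rw [← Real.rpow_add' (abs_nonneg _) (by norm_num)]; simp
    _ ≤ _ := by
        have : 0 ≤ 1 - p := by linarith
        gcongr

lemma summable_abs_of_mem {p : ℝ} (hp0 : 0 < p) (hp1 : p < 1) {f : ℕ → ℝ} (hf : MemLpSeq p f) :
    Summable fun j => |f j| :=
  Summable.of_nonneg_of_le (fun _ => abs_nonneg _)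
    (fun j => abs_le_rpow_mul hp1 (abs_le_pNorm hp0 hf j)) (Summable.mul_left _ hf)

lemma tsum_abs_le {p : ℝ} (hp0 : 0 < p) (hp1 : p < 1) {f : ℕ → ℝ} (hf : MemLpSeq p f) :
    ∑' j, |f j| ≤ pNorm p f := by
  calc ∑' j, |f j| ≤ ∑' j, pNorm p f ^ (1 - p) * |f j| ^ p :=
        Summable.tsum_le_tsum (fun j => abs_le_rpow_mul hp1 (abs_le_pNorm hp0 hf j))
          (summable_abs_of_mem hp0 hp1 hf) (Summable.mul_left _ hf)
    _ = pNorm p f ^ (1 - p) * pNorm p f ^ p := by rw [tsum_mul_left, pNorm_rpow hp0]; rfl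
    _ = pNorm p f := by
        rw [← Real.rpow_add' (pNorm_nonneg p f) (by norm_num)]; simp

section basis

variable {p : ℝ} {x : ℕ → ℕ → ℝ} {xs : ℕ → (ℕ → ℝ) → ℝ}

lemma xs_add (hb : IsLpBasis p x xs) (m : ℕ) {f g : ℕ → ℝ} (hf : MemLpSeq p f)
    (hg : MemLpSeq p g) : xs m (fun j => f j + g j) = xs m f + xs m g :=
  hb.map_add m f g hf hg

lemma xs_zero (hb : IsLpBasis p x xs) (m : ℕ) : xs m (fun _ => 0) = 0 := by
  have := hb.map_smul m 0 (x 0) (hb.mem 0)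
  simpa using this

lemma xs_sum (hp0 : 0 < p) (hp1 : p < 1) (hb : IsLpBasis p x xs) (m : ℕ) {y : ℕ → ℕ → ℝ}
    (hy : ∀ n, MemLpSeq p (y n)) (c : ℕ → ℝ)
    (A : Finset ℕ) : xs m (fun j => ∑ n ∈ A, c n * y n j) = ∑ n ∈ A, c n * xs m (y n) := by
  induction A using Finset.induction_on with
  | empty => simpa using xs_zero hb m
  | insert a A ha ih =>
    simp_rw [Finset.sum_insert ha]
    rw [xs_add hb m (mem_smul _ (hy a)) (mem_sum hp0 hp1 hy c A), ih,
      hb.map_smul m _ _ (hy a)]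

lemma xs_sum' (hp0 : 0 < p) (hp1 : p < 1) (hb : IsLpBasis p x xs) (m : ℕ) (c : ℕ → ℝ)
    (A : Finset ℕ) : xs m (fun j => ∑ n ∈ A, c n * x n j) = if m ∈ A then c m else 0 := by
  rw [xs_sum hp0 hp1 hb m hb.mem]
  simp [hb.biorth]

/-- quasi-greedy constants in terms of `qn` -/
lemma qg_qn (hp0 : 0 < p) (hqg : QuasiGreedy p x xs) :
    ∃ K ≥ (1 : ℝ), ∀ f, MemLpSeq p f → ∀ A : Finset ℕ,
    GreedySet (fun n => xs n f) A →
    qn p (fun j => ∑ n ∈ A, xs n f * x n j) ≤ K * qn p f := by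
  obtain ⟨C, hC, h⟩ := hqg
  refine ⟨C ^ p, Real.one_le_rpow hC hp0.le, fun f hf A hA => ?_⟩
  have := Real.rpow_le_rpow (pNorm_nonneg _ _) (h f hf A hA) hp0.le
  rwa [Real.mul_rpow (by linarith) (pNorm_nonneg _ _), pNorm_rpow hp0, pNorm_rpow hp0] at this

/-- unconditionality for constant coefficients -/
lemma ucc (hp0 : 0 < p) (hp1 : p < 1) (hb : IsLpBasis p x xs) {K : ℝ}
    (hK : ∀ f, MemLpSeq p f → ∀ A : Finset ℕ, GreedySet (fun n => xs n f) A →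
      qn p (fun j => ∑ n ∈ A, xs n f * x n j) ≤ K * qn p f)
    (σ : ℕ → ℝ) (hσ : ∀ n, |σ n| = 1) {A B : Finset ℕ} (hBA : B ⊆ A) :
    qn p (fun j => ∑ n ∈ B, σ n * x n j) ≤ K * qn p (fun j => ∑ n ∈ A, σ n * x n j) := by
  have := hK _ (mem_sum hp0 hp1 hb.mem σ A) B ?_
  · convert this using 3 with j
    refine Finset.sum_congr rfl fun n hn => ?_
    rw [xs_sum' hp0 hp1 hb, if_pos (hBA hn)]
  · intro n hn k hk
    simp only [xs_sum' hp0 hp1 hb, if_pos (hBA hn), hσ]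
    split_ifs
    · rw [hσ]
    · simp

lemma coef01 (hp0 : 0 < p) (hp1 : p < 1) (hb : IsLpBasis p x xs) {K : ℝ} (hK1 : 1 ≤ K)
    (hK : ∀ f, MemLpSeq p f → ∀ A : Finset ℕ, GreedySet (fun n => xs n f) A →
      qn p (fun j => ∑ n ∈ A, xs n f * x n j) ≤ K * qn p f)
    (σ : ℕ → ℝ) (hσ : ∀ n, |σ n| = 1) (A : Finset ℕ) (β : ℕ → ℝ)
    (hβ : ∀ n ∈ A, 0 ≤ β n ∧ β n ≤ 1) :
    qn p (fun j => ∑ n ∈ A, (β n * σ n) * x n j) ≤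
      K * (2 ^ (-p) / (1 - 2 ^ (-p))) * qn p (fun j => ∑ n ∈ A, σ n * x n j) := by
  set ρ : ℝ := 2 ^ (-p) with hρ
  have hρ0 : 0 < ρ := by positivity
  have hρ1 : ρ < 1 := Real.rpow_lt_one_of_one_lt_of_neg (by norm_num) (by linarith)
  set Q := qn p (fun j => ∑ n ∈ A, σ n * x n j) with hQ
  have hQ0 : 0 ≤ Q := qn_nonneg _ _
  set L := K * (ρ / (1 - ρ)) * Q with hL
  have hLL : L = ρ * (K * Q + L) := by
    rw [hL]; have : 1 - ρ ≠ 0 := by linarith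
    field_simp; ring
  have hL0 : 0 ≤ L := by
    have : 0 < 1 - ρ := by linarith
    positivity
  set R := ∑ n ∈ A, qn p (x n) with hR
  have step : ∀ k : ℕ, ∀ β : ℕ → ℝ, (∀ n ∈ A, 0 ≤ β n ∧ β n ≤ 1) →
      qn p (fun j => ∑ n ∈ A, (β n * σ n) * x n j) ≤ L + R * ρ ^ k := by
    intro k
    induction k with
    | zero =>
      intro β hβ
      refine (qn_sum_le hp0 hp1 hb.mem _ A).trans ?_
      have : ∑ n ∈ A, |β n * σ n| ^ p * qn p (x n) ≤ R := by
        refine Finset.sum_le_sum fun n hn => ?_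
        rw [abs_mul, hσ, mul_one, abs_of_nonneg (hβ n hn).1]
        have h1 : β n ^ p ≤ 1 := Real.rpow_le_one (hβ n hn).1 (hβ n hn).2 hp0.le
        have := qn_nonneg p (x n)
        nlinarith
      rw [pow_zero, mul_one]; linarith
    | succ k ih =>
      intro β hβ
      set B := A.filter fun n => 1 / 2 ≤ β n with hB
      set β' : ℕ → ℝ := fun n => 2 * β n - if 1 / 2 ≤ β n then 1 else 0 with hβ'
      have e1 := ih β' (by
        intro n hn
        have := hβ n hn
        simp only [hβ']
        split_ifs with h <;> constructor <;> linarith)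
      have e2 := ucc hp0 hp1 hb hK σ hσ (Finset.filter_subset (fun n => 1 / 2 ≤ β n) A)
      have e3 : (fun j => ∑ n ∈ A, (β n * σ n) * x n j) = fun j =>
          (1 / 2 : ℝ) * (∑ n ∈ B, σ n * x n j + ∑ n ∈ A, (β' n * σ n) * x n j) := by
        funext j
        rw [hB, Finset.sum_filter, ← Finset.sum_add_distrib, Finset.mul_sum]
        refine Finset.sum_congr rfl fun n hn => ?_
        simp only [hβ']
        split_ifs <;> ring
      rw [e3, qn_smul]
      have e4 : |(1 / 2 : ℝ)| ^ p = ρ := by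
        rw [abs_of_pos (by norm_num), one_div, Real.inv_rpow (by norm_num), hρ,
          Real.rpow_neg (by norm_num)]
      rw [e4]
      have e5 := qn_add_le hp0 hp1 (mem_sum hp0 hp1 hb.mem σ B)
        (mem_sum hp0 hp1 hb.mem (fun n => β' n * σ n) A)
      calc _ ≤ ρ * (K * Q + (L + R * ρ ^ k)) := by
            apply mul_le_mul_of_nonneg_left _ hρ0.le
            exact e5.trans (add_le_add e2 e1)
        _ = ρ * (K * Q + L) + R * ρ ^ (k + 1) := by ring
        _ = _ := by rw [← hLL]
  have hlim : Filter.Tendsto (fun k : ℕ => L + R * ρ ^ k) Filter.atTop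
      (nhds (L + R * 0)) := by
    apply Filter.Tendsto.const_add
    apply Filter.Tendsto.const_mul
    exact tendsto_pow_atTop_nhds_zero_of_lt_one hρ0.le hρ1
  have := ge_of_tendsto' hlim fun k => step k β hβ
  simpa using this

lemma bdd_nonneg (hb : IsLpBasis p x xs) :
    ∃ b > 0, ∀ n f, MemLpSeq p f → |xs n f| ≤ b * pNorm p f := by
  obtain ⟨b, h⟩ := hb.bdd
  refine ⟨max b 1, by positivity, fun n f hf => (h n f hf).trans ?_⟩
  have := pNorm_nonneg p f
  gcongr
  exact le_max_left _ _

lemma finite_level (hp0 : 0 < p) (hp1 : p < 1) (hb : IsLpBasis p x xs) {f : ℕ → ℝ}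
    (hf : MemLpSeq p f) {t : ℝ} (ht : 0 < t) : {n | t ≤ |xs n f|}.Finite := by
  obtain ⟨b, hb0, h⟩ := bdd_nonneg hb
  obtain ⟨A, c, hc⟩ := hb.dense f hf (t / b) (by positivity)
  refine A.finite_toSet.subset fun n hn => ?_
  by_contra hnA
  have hnA : n ∉ A := hnA
  have hm := mem_sum hp0 hp1 hb.mem c A
  have hg : MemLpSeq p (fun j => f j - ∑ n ∈ A, c n * x n j) := by
    have := mem_add hp0 hp1 hf (mem_smul (-1) hm)
    convert this using 2
    ring
  have e := xs_add hb n hg hm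
  rw [xs_sum' hp0 hp1 hb, if_neg hnA] at e
  simp only [sub_add_cancel, add_zero] at e
  have h1 := h n _ hg
  rw [← e] at h1
  rw [lt_div_iff₀ hb0] at hc
  have : t ≤ |xs n f| := hn
  change |xs n f| ≤ _ at h1
  linarith

lemma level (hp0 : 0 < p) (hp1 : p < 1) (hb : IsLpBasis p x xs) (hqg : QuasiGreedy p x xs) :
    ∃ r > (1 : ℝ), ∃ M ≥ (0 : ℝ), ∀ f, MemLpSeq p f → qn p f ≤ 1 → ∀ t > 0, ∀ A : Finset ℕ,
      (∀ n ∈ A, t ≤ |xs n f| ∧ |xs n f| < r * t) →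
      ∃ σ : ℕ → ℝ, (∀ n, |σ n| = 1) ∧ ∀ B ⊆ A,
        qn p (fun j => ∑ n ∈ B, σ n * x n j) ≤ M * t ^ (-p) := by
  obtain ⟨K, hK1, hK⟩ := qg_qn hp0 hqg
  have hρ1 : (2:ℝ) ^ (-p) < 1 := Real.rpow_lt_one_of_one_lt_of_neg (by norm_num) (by linarith)
  set L' := K * (2 ^ (-p) / (1 - 2 ^ (-p))) with hL'
  have hL'0 : 0 < L' := by
    have : (0:ℝ) < 1 - 2 ^ (-p) := by linarith
    positivity
  set δ := (1 / (2 * L')) ^ (1 / p) with hδ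
  have hδ0 : 0 < δ := by positivity
  have hδp : δ ^ p * L' = 1 / 2 := by
    rw [hδ, ← Real.rpow_mul (by positivity), one_div_mul_cancel hp0.ne', Real.rpow_one]
    field_simp
  refine ⟨1 + δ, by linarith, K * (4 * K), by positivity, fun f hf hf1 t ht A0 hA0 => ?_⟩
  set σ : ℕ → ℝ := fun n => if 0 ≤ xs n f then 1 else -1 with hσ
  have hσ1 : ∀ n, |σ n| = 1 := by
    intro n; simp only [hσ]; split_ifs <;> simp
  have hσa : ∀ n, σ n * |xs n f| = xs n f := by
    intro n; simp only [hσ]; split_ifs with h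
    · rw [abs_of_nonneg h, one_mul]
    · rw [abs_of_neg (not_le.1 h)]; ring
  refine ⟨σ, hσ1, fun B hB => ?_⟩
  have htr : 0 < (1 + δ) * t := by positivity
  set A1 := (finite_level hp0 hp1 hb hf ht).toFinset with hA1
  set A2 := (finite_level hp0 hp1 hb hf htr).toFinset with hA2
  have m1 : ∀ n, n ∈ A1 ↔ t ≤ |xs n f| := by simp [hA1]
  have m2 : ∀ n, n ∈ A2 ↔ (1 + δ) * t ≤ |xs n f| := by simp [hA2]
  have g1 : GreedySet (fun n => xs n f) A1 := by
    intro n hn k hk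
    rw [m1] at hn hk
    simp only; linarith
  have g2 : GreedySet (fun n => xs n f) A2 := by
    intro n hn k hk
    rw [m2] at hn hk
    simp only; linarith
  have h21 : A2 ⊆ A1 := by
    intro n hn; rw [m2] at hn; rw [m1]; nlinarith
  set A := A1 \ A2 with hA
  have mA : ∀ n, n ∈ A ↔ t ≤ |xs n f| ∧ |xs n f| < (1 + δ) * t := by
    intro n; rw [hA, Finset.mem_sdiff, m1, m2, not_le]
  have hBA : B ⊆ A := fun n hn => (mA n).2 (hA0 n (hB hn))
  have q1 := hK f hf A1 g1
  have q2 := hK f hf A2 g2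
  have hS : qn p (fun j => ∑ n ∈ A, xs n f * x n j) ≤ 2 * K := by
    have e : (fun j => ∑ n ∈ A, xs n f * x n j) = fun j =>
        ∑ n ∈ A1, xs n f * x n j + (-1) * ∑ n ∈ A2, xs n f * x n j := by
      funext j
      rw [hA, ← Finset.sum_sdiff h21]; ring
    rw [e]
    refine (qn_add_le hp0 hp1 (mem_sum hp0 hp1 hb.mem _ A1)
      (mem_smul _ (mem_sum hp0 hp1 hb.mem _ A2))).trans ?_
    rw [qn_smul]
    simp only [abs_neg, abs_one, Real.one_rpow, one_mul]
    nlinarith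
  set Q := qn p (fun j => ∑ n ∈ A, σ n * x n j) with hQ
  set β : ℕ → ℝ := fun n => (|xs n f| / t - 1) / δ with hβ
  have hβ01 : ∀ n ∈ A, 0 ≤ β n ∧ β n ≤ 1 := by
    intro n hn
    rw [mA] at hn
    constructor
    · apply div_nonneg _ hδ0.le
      rw [sub_nonneg, le_div_iff₀ ht]; linarith
    · rw [div_le_one hδ0, sub_le_iff_le_add, div_le_iff₀ ht]; linarith
  have c01 := coef01 hp0 hp1 hb hK1 hK σ hσ1 A β hβ01
  have e : (fun j => t * ∑ n ∈ A, σ n * x n j) = fun j => ∑ n ∈ A, xs n f * x n j +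
      (-(t * δ)) * ∑ n ∈ A, (β n * σ n) * x n j := by
    funext j
    rw [Finset.mul_sum, Finset.mul_sum, ← Finset.sum_add_distrib]
    refine Finset.sum_congr rfl fun n hn => ?_
    have e0 : t * δ * β n = |xs n f| - t := by
      simp only [hβ]
      field_simp
    have e1 := hσa n
    linear_combination (x n j) * e1 + (x n j) * (σ n) * e0
  have hle : t ^ p * Q ≤ 2 * K + t ^ p * (1 / 2) * Q := by
    have h1 := qn_smul p (fun j => ∑ n ∈ A, σ n * x n j) t
    rw [abs_of_pos ht] at h1
    rw [← h1, e]
    refine (qn_add_le hp0 hp1 (mem_sum hp0 hp1 hb.mem _ A)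
      (mem_smul _ (mem_sum hp0 hp1 hb.mem _ A))).trans ?_
    rw [qn_smul, abs_neg, abs_of_pos (by positivity), Real.mul_rpow ht.le hδ0.le]
    refine add_le_add hS ?_
    calc _ ≤ t ^ p * δ ^ p * (L' * Q) := by gcongr
      _ = t ^ p * (δ ^ p * L') * Q := by ring
      _ = _ := by rw [hδp]
  have hQ4 : t ^ p * Q ≤ 4 * K := by linarith
  have htp : 0 < t ^ p := by positivity
  refine (ucc hp0 hp1 hb hK σ hσ1 hBA).trans ?_
  rw [mul_assoc]
  gcongr
  rw [Real.rpow_neg ht.le, ← div_eq_mul_inv, le_div_iff₀ htp]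
  linarith

/-- unit vectors -/
def ev (i : ℕ) : ℕ → ℝ := fun j => if j = i then 1 else 0

lemma hasSum_ev (hp0 : 0 < p) (i : ℕ) : HasSum (fun j => |ev i j| ^ p) 1 := by
  have := hasSum_ite_eq i (1:ℝ)
  convert this using 2 with j
  unfold ev
  split_ifs <;> simp [Real.zero_rpow hp0.ne']

lemma mem_ev (hp0 : 0 < p) (i : ℕ) : MemLpSeq p (ev i) := (hasSum_ev hp0 i).summable

lemma qn_ev (hp0 : 0 < p) (i : ℕ) : qn p (ev i) = 1 := (hasSum_ev hp0 i).tsum_eq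

lemma expand (hp0 : 0 < p) (hp1 : p < 1) (hb : IsLpBasis p x xs) (n : ℕ) {f : ℕ → ℝ}
    (hf : MemLpSeq p f) :
    (Summable fun i => |f i| * |xs n (ev i)|) ∧ |xs n f| ≤ ∑' i, |f i| * |xs n (ev i)| := by
  obtain ⟨b, hb0, h⟩ := bdd_nonneg hb
  have hev : ∀ i, |xs n (ev i)| ≤ b := by
    intro i
    have := h n _ (mem_ev hp0 i)
    rwa [pNorm_eq, qn_ev hp0, Real.one_rpow, mul_one] at this
  have hs : Summable fun i => |f i| * |xs n (ev i)| :=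
    Summable.of_nonneg_of_le (fun _ => by positivity)
      (fun i => mul_le_mul_of_nonneg_left (hev i) (abs_nonneg _))
      ((summable_abs_of_mem hp0 hp1 hf).mul_right b)
  refine ⟨hs, ?_⟩
  have tail : ∀ N : ℕ, |xs n f| ≤ ∑' i, |f i| * |xs n (ev i)| +
      b * (qn p f - ∑ i ∈ Finset.range N, |f i| ^ p) ^ (1 / p) := by
    intro N
    set g : ℕ → ℝ := fun j => ∑ i ∈ Finset.range N, f i * ev i j with hg
    have hgj : ∀ j, g j = if j < N then f j else 0 := by
      intro j; simp [hg, ev]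
    set w : ℕ → ℝ := fun j => if j < N then 0 else f j with hw
    have hgm : MemLpSeq p g := mem_sum hp0 hp1 (mem_ev hp0) f _
    have hsum : HasSum (fun j => |w j| ^ p) (qn p f - ∑ i ∈ Finset.range N, |f i| ^ p) := by
      have h1 : HasSum (fun j => |f j| ^ p) (qn p f) := hf.hasSum
      have h2 : HasSum (fun j => if j ∈ Finset.range N then |f j| ^ p else 0)
          (∑ i ∈ Finset.range N, |f i| ^ p) := by
        have := hasSum_sum_of_ne_finset_zero (L := SummationFilter.unconditional ℕ)
          (s := Finset.range N)
          (f := fun j => if j ∈ Finset.range N then |f j| ^ p else 0)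
          (fun j hj => if_neg hj)
        convert this using 1
        refine Finset.sum_congr rfl fun j hj => ?_
        rw [if_pos hj]
      have hfun : (fun j => |w j| ^ p) =
          fun j => |f j| ^ p - if j ∈ Finset.range N then |f j| ^ p else 0 := by
        funext j
        by_cases hj : j < N <;> simp [hw, hj, Real.zero_rpow hp0.ne']
      rw [hfun]
      exact h1.sub h2
    have hwm : MemLpSeq p w := hsum.summable
    have hfg : f = fun j => g j + w j := by
      funext j; rw [hgj]; simp only [hw]; split_ifs <;> simp
    have e1 : xs n f = xs n g + xs n w := by
      nth_rewrite 1 [hfg]; exact xs_add hb n hgm hwm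
    have e2 : |xs n w| ≤ b * (qn p f - ∑ i ∈ Finset.range N, |f i| ^ p) ^ (1 / p) := by
      have := h n w hwm
      rwa [pNorm_eq, qn, hsum.tsum_eq] at this
    have e3 : |xs n g| ≤ ∑' i, |f i| * |xs n (ev i)| := by
      rw [hg, xs_sum hp0 hp1 hb n (mem_ev hp0)]
      refine (Finset.abs_sum_le_sum_abs _ _).trans ?_
      rw [Finset.sum_congr rfl fun i _ => abs_mul (f i) (xs n (ev i))]
      exact hs.sum_le_tsum _ (fun _ _ => by positivity)
    rw [e1]
    exact (abs_add_le _ _).trans (add_le_add e3 e2)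
  have hlim : Filter.Tendsto (fun N : ℕ => ∑' i, |f i| * |xs n (ev i)| +
      b * (qn p f - ∑ i ∈ Finset.range N, |f i| ^ p) ^ (1 / p)) Filter.atTop
      (nhds (∑' i, |f i| * |xs n (ev i)| + b * (qn p f - qn p f) ^ (1 / p))) := by
    apply Filter.Tendsto.const_add
    apply Filter.Tendsto.const_mul
    apply Filter.Tendsto.rpow_const
    · exact Filter.Tendsto.const_sub _ (Summable.hasSum hf).tendsto_sum_nat
    · right; positivity
  have := ge_of_tendsto' hlim tail
  simpa [Real.zero_rpow (inv_pos.2 hp0).ne'] using this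

end basis

lemma kh_moments (c : ℕ → ℝ) (A : Finset ℕ) :
    (∑ B ∈ A.powerset, (2 * ∑ n ∈ B, c n - ∑ n ∈ A, c n) ^ 2 = 2 ^ A.card * ∑ n ∈ A, c n ^ 2) ∧
    (∑ B ∈ A.powerset, (2 * ∑ n ∈ B, c n - ∑ n ∈ A, c n) ^ 4
      ≤ 2 ^ A.card * (3 * (∑ n ∈ A, c n ^ 2) ^ 2)) := by
  induction A using Finset.induction_on with
  | empty => simp
  | insert a A ha ih =>
    obtain ⟨h2, h4⟩ := ih
    have key : ∀ k : ℕ, ∑ B ∈ (insert a A).powerset,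
        (2 * ∑ n ∈ B, c n - ∑ n ∈ insert a A, c n) ^ k =
        ∑ B ∈ A.powerset, (((2 * ∑ n ∈ B, c n - ∑ n ∈ A, c n) - c a) ^ k +
          ((2 * ∑ n ∈ B, c n - ∑ n ∈ A, c n) + c a) ^ k) := by
      intro k
      rw [Finset.sum_powerset_insert ha, ← Finset.sum_add_distrib]
      refine Finset.sum_congr rfl fun B hB => ?_
      have haB : a ∉ B := fun h => ha (Finset.mem_powerset.1 hB h)
      rw [Finset.sum_insert haB, Finset.sum_insert ha]
      congr 2 <;> ring
    rw [key, key, Finset.card_insert_of_notMem ha, Finset.sum_insert ha]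
    constructor
    · have : ∀ B ∈ A.powerset, (((2 * ∑ n ∈ B, c n - ∑ n ∈ A, c n) - c a) ^ 2 +
          ((2 * ∑ n ∈ B, c n - ∑ n ∈ A, c n) + c a) ^ 2) =
          2 * (2 * ∑ n ∈ B, c n - ∑ n ∈ A, c n) ^ 2 + 2 * c a ^ 2 := by
        intros; ring
      rw [Finset.sum_congr rfl this, Finset.sum_add_distrib, ← Finset.mul_sum, h2]
      simp [Finset.card_powerset]
      ring
    · have : ∀ B ∈ A.powerset, (((2 * ∑ n ∈ B, c n - ∑ n ∈ A, c n) - c a) ^ 4 +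
          ((2 * ∑ n ∈ B, c n - ∑ n ∈ A, c n) + c a) ^ 4) =
          2 * (2 * ∑ n ∈ B, c n - ∑ n ∈ A, c n) ^ 4 +
          12 * c a ^ 2 * (2 * ∑ n ∈ B, c n - ∑ n ∈ A, c n) ^ 2 + 2 * c a ^ 4 := by
        intros; ring
      rw [Finset.sum_congr rfl this, Finset.sum_add_distrib, Finset.sum_add_distrib,
        ← Finset.mul_sum, ← Finset.mul_sum, h2]
      simp [Finset.card_powerset]
      have hpos : (0:ℝ) ≤ 2 ^ A.card * c a ^ 4 := by positivity
      rw [pow_succ (2:ℝ) A.card]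
      nlinarith

lemma kh (c : ℕ → ℝ) (A : Finset ℕ) :
    2 ^ A.card * ∑ n ∈ A, |c n| ≤
      2 * √A.card * ∑ B ∈ A.powerset, |2 * ∑ n ∈ B, c n - ∑ n ∈ A, c n| := by
  obtain ⟨h2, h4⟩ := kh_moments c A
  set S := ∑ n ∈ A, c n ^ 2 with hS
  have hS0 : 0 ≤ S := Finset.sum_nonneg fun _ _ => sq_nonneg _
  have hCS : ∑ n ∈ A, |c n| ≤ √A.card * √S := by
    rw [← Real.sqrt_mul (by positivity)]
    apply Real.le_sqrt_of_sq_le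
    have := sq_sum_le_card_mul_sum_sq (s := A) (f := fun n => |c n|)
    simpa [sq_abs] using this
  have hmain : 2 ^ A.card * √S ≤ 2 * ∑ B ∈ A.powerset, |2 * ∑ n ∈ B, c n - ∑ n ∈ A, c n| := by
    rcases hS0.eq_or_lt with h | h
    · rw [← h]; simp; exact Finset.sum_nonneg fun _ _ => abs_nonneg _
    set s := √S with hs
    have hspos : 0 < s := Real.sqrt_pos.2 h
    have hss : S = s ^ 2 := (Real.sq_sqrt hS0).symm
    -- pointwise: 16 s^3 |y| ≥ 12 s^2 y^2 - y^4
    have pt : ∀ y : ℝ, 12 * s ^ 2 * y ^ 2 - y ^ 4 ≤ 16 * s ^ 3 * |y| := by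
      intro y
      rw [← sq_abs y, show y ^ 4 = |y| ^ 4 by rw [show 4 = 2 * 2 from rfl, pow_mul, pow_mul, sq_abs]]
      have hy := abs_nonneg y
      set z := |y|
      have : 0 ≤ z * ((z - 2 * s) ^ 2 * (z + 4 * s)) := by positivity
      nlinarith
    have := Finset.sum_le_sum (s := A.powerset)
      (fun B _ => pt (2 * ∑ n ∈ B, c n - ∑ n ∈ A, c n))
    rw [Finset.sum_sub_distrib, ← Finset.mul_sum, ← Finset.mul_sum, h2] at this
    set X := ∑ B ∈ A.powerset, |2 * ∑ n ∈ B, c n - ∑ n ∈ A, c n|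
    rw [hss] at this h4
    have h9 : s ^ 3 * (9 * (2 ^ A.card * s)) ≤ s ^ 3 * (16 * X) := by nlinarith
    have h10 := le_of_mul_le_mul_left h9 (by positivity)
    have : 0 ≤ 2 ^ A.card * s := by positivity
    nlinarith
  calc 2 ^ A.card * ∑ n ∈ A, |c n| ≤ 2 ^ A.card * (√A.card * √S) := by gcongr
    _ = √A.card * (2 ^ A.card * √S) := by ring
    _ ≤ √A.card * (2 * ∑ B ∈ A.powerset, |2 * ∑ n ∈ B, c n - ∑ n ∈ A, c n|) := by gcongr
    _ = _ := by ring

lemma max_avg {p : ℝ} (hp0 : 0 < p) (hp1 : p < 1) (c : ℕ → ℝ) (A : Finset ℕ) (n : ℕ)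
    (hn : n ∈ A) :
    2 ^ A.card * |c n| ^ p ≤ 2 * ∑ B ∈ A.powerset, |∑ n ∈ B, c n| ^ p := by
  obtain ⟨A', ha, rfl⟩ : ∃ A', n ∉ A' ∧ insert n A' = A :=
    ⟨A.erase n, by simp, Finset.insert_erase hn⟩
  rw [Finset.sum_powerset_insert ha, ← Finset.sum_add_distrib, Finset.card_insert_of_notMem ha]
  have : ∑ B ∈ A'.powerset, |c n| ^ p ≤ ∑ B ∈ A'.powerset,
      (|∑ n ∈ B, c n| ^ p + |∑ n ∈ insert n B, c n| ^ p) := by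
    refine Finset.sum_le_sum fun B hB => ?_
    have haB : n ∉ B := fun h => ha (Finset.mem_powerset.1 hB h)
    rw [Finset.sum_insert haB]
    have := abs_rpow_add_le hp0 hp1 (-∑ n ∈ B, c n) (c n + ∑ n ∈ B, c n)
    rw [abs_neg] at this
    simpa using this
  simp [Finset.card_powerset] at this
  rw [pow_succ]; nlinarith

lemma levels_pos {r D γ : ℝ} (hr : 1 < r) (hD : 0 ≤ D) (hγ : 0 < γ) (a : ℕ → ℝ)
    (F : Finset ℕ)
    (H : ∀ t > 0, ∀ B ⊆ F, (∀ n ∈ B, t ≤ a n ∧ a n < r * t) → (B.card : ℝ) * t ≤ D * t ^ γ)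
    (T : ℝ) (hT : 0 < T) (hF : ∀ n ∈ F, a n < T) :
    ∑ n ∈ F, a n ≤ (r * D * r ^ (-γ) / (1 - r ^ (-γ))) * T ^ γ := by
  set ρ := r ^ (-γ) with hρ
  have hr0 : 0 < r := by linarith
  have hρ0 : 0 < ρ := Real.rpow_pos_of_pos hr0 _
  have hρ1 : ρ < 1 := Real.rpow_lt_one_of_one_lt_of_neg hr (by linarith)
  set E := r * D * ρ / (1 - ρ) with hE
  have hEE : r * D * ρ + E * ρ = E := by
    rw [hE]; have : 1 - ρ ≠ 0 := by linarith
    field_simp; ring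
  have step : ∀ k : ℕ, ∀ T > 0, ∀ A ⊆ F, (∀ n ∈ A, a n < T) →
      ∑ n ∈ A, a n ≤ E * T ^ γ + F.card * T * (r⁻¹) ^ k := by
    intro k
    induction k with
    | zero =>
      intro T hT A hA hAT
      have h1 : ∑ n ∈ A, a n ≤ A.card * T := by
        rw [← nsmul_eq_mul]; exact Finset.sum_le_card_nsmul _ _ _ fun n hn => (hAT n hn).le
      have h2 : (A.card : ℝ) ≤ F.card := by exact_mod_cast Finset.card_le_card hA
      have h3 : 0 ≤ E * T ^ γ := by
        have : 0 < 1 - ρ := by linarith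
        positivity
      have : (A.card : ℝ) * T ≤ F.card * T := by gcongr
      simp; linarith
    | succ k ih =>
      intro T hT A hA hAT
      rw [← Finset.sum_filter_add_sum_filter_not A (fun n => T / r ≤ a n)]
      have hTr : 0 < T / r := by positivity
      have e1 := H (T / r) hTr (A.filter fun n => T / r ≤ a n)
        ((Finset.filter_subset _ _).trans hA) (by
          intro n hn
          simp only [Finset.mem_filter] at hn
          refine ⟨hn.2, ?_⟩
          have := hAT n hn.1
          field_simp; exact this)
      have e2 := ih (T / r) hTr (A.filter fun n => ¬ T / r ≤ a n)
        ((Finset.filter_subset _ _).trans hA) (by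
          intro n hn
          simp only [Finset.mem_filter, not_le] at hn
          exact hn.2)
      have e3 : ∑ n ∈ A.filter (fun n => T / r ≤ a n), a n ≤
          (A.filter fun n => T / r ≤ a n).card * T := by
        rw [← nsmul_eq_mul]; exact Finset.sum_le_card_nsmul _ _ _ fun n hn =>
          (hAT n (Finset.mem_filter.1 hn).1).le
      have e4 : (T / r) ^ γ = T ^ γ * ρ := by
        rw [Real.div_rpow hT.le hr0.le, hρ, Real.rpow_neg hr0.le]; rfl
      rw [e4] at e1 e2
      have e5 : ((A.filter fun n => T / r ≤ a n).card : ℝ) * T =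
        r * (((A.filter fun n => T / r ≤ a n).card : ℝ) * (T / r)) := by field_simp
      have e6 := mul_le_mul_of_nonneg_left e1 hr0.le
      have e7 : (F.card : ℝ) * (T / r) * r⁻¹ ^ k = F.card * T * r⁻¹ ^ (k + 1) := by
        rw [pow_succ]; ring
      rw [e7] at e2
      have e8 : E * T ^ γ = r * (D * (T ^ γ * ρ)) + E * (T ^ γ * ρ) := by
        nth_rewrite 1 [← hEE]; ring
      linarith
  have hlim : Filter.Tendsto (fun k : ℕ => E * T ^ γ + F.card * T * (r⁻¹) ^ k) Filter.atTop
      (nhds (E * T ^ γ + F.card * T * 0)) := by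
    apply Filter.Tendsto.const_add
    apply Filter.Tendsto.const_mul
    exact tendsto_pow_atTop_nhds_zero_of_lt_one (by positivity) (inv_lt_one_of_one_lt₀ hr)
  have := ge_of_tendsto' hlim fun k => step k T hT F subset_rfl hF
  simpa using this

lemma levels_neg {r D : ℝ} (hr : 1 < r) (hD : 0 ≤ D) (a : ℕ → ℝ)
    (F : Finset ℕ)
    (H : ∀ t > 0, ∀ B ⊆ F, (∀ n ∈ B, t ≤ a n ∧ a n < r * t) → (B.card : ℝ) ≤ D / t ^ 2)
    (s : ℝ) (hs : 0 < s) (hF : ∀ n ∈ F, s ≤ a n) :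
    ∑ n ∈ F, a n ≤ (r * D / (1 - r⁻¹)) / s := by
  have hr0 : 0 < r := by linarith
  have hr1 : r⁻¹ < 1 := inv_lt_one_of_one_lt₀ hr
  set E := r * D / (1 - r⁻¹) with hE
  have hE0 : 0 ≤ E := div_nonneg (by positivity) (by linarith)
  have hEE : r * D + E * r⁻¹ = E := by
    rw [hE]; have : 1 - r⁻¹ ≠ 0 := by linarith
    generalize r⁻¹ = w at *
    field_simp; ring
  have step : ∀ k : ℕ, ∀ s > 0, ∀ A ⊆ F, (∀ n ∈ A, s ≤ a n ∧ a n < s * r ^ k) →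
      ∑ n ∈ A, a n ≤ E / s := by
    intro k
    induction k with
    | zero =>
      intro s hs A hA hAs
      have : A = ∅ := by
        rw [Finset.eq_empty_iff_forall_notMem]
        intro n hn
        have := hAs n hn
        simp at this; linarith
      rw [this]; simp; positivity
    | succ k ih =>
      intro s hs A hA hAs
      rw [← Finset.sum_filter_add_sum_filter_not A (fun n => a n < r * s)]
      have e1 := H s hs (A.filter fun n => a n < r * s)
        ((Finset.filter_subset _ _).trans hA) (by
          intro n hn
          simp only [Finset.mem_filter] at hn
          exact ⟨(hAs n hn.1).1, hn.2⟩)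
      have e2 := ih (r * s) (by positivity) (A.filter fun n => ¬ a n < r * s)
        ((Finset.filter_subset _ _).trans hA) (by
          intro n hn
          simp only [Finset.mem_filter, not_lt] at hn
          refine ⟨hn.2, ?_⟩
          have := (hAs n hn.1).2
          rw [pow_succ] at this; linarith)
      have e3 : ∑ n ∈ A.filter (fun n => a n < r * s), a n ≤
          (A.filter fun n => a n < r * s).card * (r * s) := by
        rw [← nsmul_eq_mul]; exact Finset.sum_le_card_nsmul _ _ _ fun n hn =>
          (Finset.mem_filter.1 hn).2.le
      have e6 := mul_le_mul_of_nonneg_right e1 (by positivity : 0 ≤ r * s)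
      have e7 : D / s ^ 2 * (r * s) = r * D / s := by field_simp
      have e8 : E / s = r * D / s + E / (r * s) := by
        nth_rewrite 1 [← hEE]; field_simp
      linarith
  obtain ⟨k, hk⟩ : ∃ k : ℕ, ∀ n ∈ F, a n < s * r ^ k := by
    have hk := (tendsto_pow_atTop_atTop_of_one_lt hr)
    obtain ⟨k, hk⟩ := (hk.eventually_gt_atTop ((∑ n ∈ F, a n) / s)).exists
    refine ⟨k, fun n hn => ?_⟩
    rw [div_lt_iff₀ hs] at hk
    have := Finset.single_le_sum (f := a) (fun m hm => hs.le.trans (hF m hm)) hn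
    linarith
  exact step k s hs F subset_rfl fun n hn => ⟨hF n hn, hk n hn⟩

/-- the abstract bootstrap -/
lemma bootstrap {p r D M T : ℝ} (hp0 : 0 < p) (hp1 : p < 1) (hr : 1 < r) (hD : 0 ≤ D)
    (hM : 0 ≤ M) (hT : 0 < T)
    (a : ℕ → ℕ → ℝ) (ha0 : ∀ n i, 0 ≤ a n i) (haT : ∀ n i, a n i < T)
    (H1 : ∀ i, ∀ t > 0, ∀ B : Finset ℕ, (∀ n ∈ B, t ≤ a n i ∧ a n i < r * t) →
      (B.card : ℝ) ≤ D / t ^ 2)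
    (H2 : ∀ i, ∀ t > 0, ∀ B : Finset ℕ, (∀ n ∈ B, t ≤ a n i ∧ a n i < r * t) →
      ∀ φ, (∀ j, ∑ n ∈ B, a n j ≤ φ) → (B.card : ℝ) ≤ M * t ^ (-p) * φ) :
    ∃ C : ℝ, 0 ≤ C ∧ ∀ i (F : Finset ℕ), ∑ n ∈ F, a n i ≤ C := by
  set E := r * D / (1 - r⁻¹) with hE
  have hE0 : 0 ≤ E := div_nonneg (by positivity) (by have := inv_lt_one_of_one_lt₀ hr; linarith)
  set θ := (1 + p) / 2 with hθ
  set C' := D + E with hC'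
  have hC'0 : 0 ≤ C' := by positivity
  set γ := θ - p with hγ
  have hγ0 : 0 < γ := by rw [hγ, hθ]; linarith
  set W := M * C' ^ (1 - θ) with hW
  have hW0 : 0 ≤ W := by positivity
  set Z := r * r ^ (-γ) / (1 - r ^ (-γ)) * T ^ γ * W with hZ
  have hZ0 : 0 ≤ Z := by
    have := Real.rpow_lt_one_of_one_lt_of_neg hr (by linarith : -γ < 0)
    have : 0 < 1 - r ^ (-γ) := by linarith
    positivity
  refine ⟨Z ^ (1 / (1 - θ)), by positivity, fun i F => ?_⟩
  have hbd : BddAbove (Set.range fun i => ∑ n ∈ F, a n i) := by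
    refine ⟨F.card * T, ?_⟩
    rintro _ ⟨j, rfl⟩
    simp only
    rw [← nsmul_eq_mul]; exact Finset.sum_le_card_nsmul _ _ _ fun n hn => (haT n j).le
  set Φ := ⨆ i, ∑ n ∈ F, a n i with hΦ
  have hle : ∀ i, ∑ n ∈ F, a n i ≤ Φ := fun i => le_ciSup hbd i
  have hΦ0 : 0 ≤ Φ := (Finset.sum_nonneg fun n _ => ha0 n i).trans (hle i)
  refine (hle i).trans ?_
  have hθ1 : 0 < 1 - θ := by rw [hθ]; linarith
  have hθ0 : 0 < θ := by rw [hθ]; linarith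
  have key : Φ ≤ Z * Φ ^ θ := by
    apply ciSup_le
    intro i
    have := levels_pos hr (D := W * Φ ^ θ) (by positivity) hγ0 (fun n => a n i) F ?_ T hT
      (fun n _ => haT n i)
    · refine this.trans (le_of_eq ?_)
      rw [hZ]; ring
    · intro t ht B hB hBt
      have c1 := H1 i t ht B hBt
      have c2 : ∀ j, ∑ n ∈ B, a n j ≤ C' / t := by
        intro j
        rw [← Finset.sum_filter_add_sum_filter_not B (fun n => t ≤ a n j)]
        have e1 := levels_neg hr hD (fun n => a n j) (B.filter fun n => t ≤ a n j)
          (fun t ht B' _ h => H1 j t ht B' h) t ht (fun n hn => (Finset.mem_filter.1 hn).2)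
        have e2 : ∑ n ∈ B.filter (fun n => ¬ t ≤ a n j), a n j ≤
            (B.filter fun n => ¬ t ≤ a n j).card * t := by
          rw [← nsmul_eq_mul]; exact Finset.sum_le_card_nsmul _ _ _ fun n hn =>
            (not_le.1 (Finset.mem_filter.1 hn).2).le
        have e3 : ((B.filter fun n => ¬ t ≤ a n j).card : ℝ) ≤ D / t ^ 2 :=
          le_trans (by exact_mod_cast Finset.card_le_card (Finset.filter_subset _ _)) c1
        have e4 := mul_le_mul_of_nonneg_right e3 ht.le
        have e5 : D / t ^ 2 * t = D / t := by field_simp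
        have e6 : C' / t = D / t + E / t := by rw [hC']; ring
        linarith
      have c3 : ∀ j, ∑ n ∈ B, a n j ≤ Φ ^ θ * (C' / t) ^ (1 - θ) := by
        intro j
        have s0 : 0 ≤ ∑ n ∈ B, a n j := Finset.sum_nonneg fun n _ => ha0 n j
        have s1 : ∑ n ∈ B, a n j ≤ Φ :=
          (Finset.sum_le_sum_of_subset_of_nonneg hB fun n _ _ => ha0 n j).trans (hle j)
        have s2 := c2 j
        set S := ∑ n ∈ B, a n j
        calc S = S ^ θ * S ^ (1 - θ) := by
              rw [← Real.rpow_add' s0 (by norm_num)]; simp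
          _ ≤ _ := by gcongr
      have c4 := H2 i t ht B hBt _ c3
      calc (B.card : ℝ) * t ≤ M * t ^ (-p) * (Φ ^ θ * (C' / t) ^ (1 - θ)) * t := by gcongr
        _ = W * Φ ^ θ * (t ^ (-p) * t ^ (-(1 - θ)) * t ^ (1:ℝ)) := by
            rw [Real.div_rpow hC'0 ht.le, Real.rpow_neg ht.le (1 - θ), Real.rpow_one, hW]
            field_simp
        _ = _ := by
            rw [← Real.rpow_add ht, ← Real.rpow_add ht]
            congr 2; rw [hγ]; ring
  rcases hΦ0.eq_or_lt with h | h
  · rw [← h]; positivity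
  have h1 : Φ ^ (1 - θ) ≤ Z := by
    have e : Φ = Φ ^ (1 - θ) * Φ ^ θ := by rw [← Real.rpow_add h]; simp
    have hpos : 0 < Φ ^ θ := Real.rpow_pos_of_pos h _
    refine le_of_mul_le_mul_right ?_ hpos
    rw [← e]; exact key
  calc Φ = (Φ ^ (1 - θ)) ^ (1 / (1 - θ)) := by
        rw [← Real.rpow_mul hΦ0, mul_one_div_cancel hθ1.ne', Real.rpow_one]
    _ ≤ _ := by gcongr

section final

variable {p : ℝ} {x : ℕ → ℕ → ℝ} {xs : ℕ → (ℕ → ℝ) → ℝ}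

lemma card_le_tsum (hp0 : 0 < p) (hp1 : p < 1) (hb : IsLpBasis p x xs) (A : Finset ℕ) :
    (Summable fun i => ∑ n ∈ A, |x n i| * |xs n (ev i)|) ∧
    (A.card : ℝ) ≤ ∑' i, ∑ n ∈ A, |x n i| * |xs n (ev i)| := by
  have hs : ∀ n ∈ A, Summable fun i => |x n i| * |xs n (ev i)| :=
    fun n _ => (expand hp0 hp1 hb n (hb.mem n)).1
  refine ⟨summable_sum hs, ?_⟩
  rw [Summable.tsum_finsetSum hs, Finset.card_eq_sum_ones]
  push_cast
  refine Finset.sum_le_sum fun n _ => ?_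
  have := (expand hp0 hp1 hb n (hb.mem n)).2
  rwa [hb.biorth, if_pos rfl, abs_one] at this

lemma count_b (hp0 : 0 < p) (hp1 : p < 1) (hb : IsLpBasis p x xs) {N : ℝ}
    (hN : ∀ n, pNorm p (x n) ≤ N) (A : Finset ℕ) (σ : ℕ → ℝ) (hσ : ∀ n, |σ n| = 1) {Q : ℝ}
    (hQ : ∀ B ⊆ A, qn p (fun j => ∑ n ∈ B, σ n * x n j) ≤ Q) {φ : ℝ}
    (hφ : ∀ j, ∑ n ∈ A, |xs n (ev j)| ≤ φ) :
    (A.card : ℝ) ≤ 2 * N ^ (1 - p) * Q * φ := by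
  obtain ⟨hs, hle⟩ := card_le_tsum hp0 hp1 hb A
  have hN0 : 0 ≤ N := (pNorm_nonneg p (x 0)).trans (hN 0)
  have hφ0 : 0 ≤ φ := (Finset.sum_nonneg fun n _ => abs_nonneg _).trans (hφ 0)
  set κ := N ^ (1 - p) with hκ
  have hκ0 : 0 ≤ κ := by positivity
  set G : ℕ → ℝ := fun i => ∑ B ∈ A.powerset, |∑ n ∈ B, σ n * x n i| ^ p with hG
  have hGs : ∀ B ∈ A.powerset, Summable fun i => |∑ n ∈ B, σ n * x n i| ^ p :=
    fun B _ => mem_sum hp0 hp1 hb.mem σ B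
  have hG0 : ∀ i, 0 ≤ G i := fun i =>
    Finset.sum_nonneg fun B _ => Real.rpow_nonneg (abs_nonneg _) _
  have hpt : ∀ i, ∑ n ∈ A, |x n i| * |xs n (ev i)| ≤ (κ * φ * 2 / 2 ^ A.card) * G i := by
    intro i
    have h1 : ∀ n ∈ A, |x n i| * |xs n (ev i)| ≤ (κ * 2 / 2 ^ A.card * G i) * |xs n (ev i)| := by
      intro n hn
      refine mul_le_mul_of_nonneg_right ?_ (abs_nonneg _)
      have e1 := abs_le_rpow_mul hp1 ((abs_le_pNorm hp0 (hb.mem n) i).trans (hN n))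
      have e2 := max_avg hp0 hp1 (fun n => σ n * x n i) A n hn
      simp only [abs_mul (σ n), hσ, one_mul] at e2
      have e3 : |x n i| ^ p ≤ 2 / 2 ^ A.card * G i := by
        rw [div_mul_eq_mul_div, le_div_iff₀ (by positivity)]
        rw [mul_comm]; exact e2
      calc |x n i| ≤ κ * |x n i| ^ p := e1
        _ ≤ κ * (2 / 2 ^ A.card * G i) := by gcongr
        _ = _ := by ring
    refine (Finset.sum_le_sum h1).trans ?_
    rw [← Finset.mul_sum]
    have : 0 ≤ κ * 2 / 2 ^ A.card * G i := mul_nonneg (by positivity) (hG0 i)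
    refine (mul_le_mul_of_nonneg_left (hφ i) this).trans (le_of_eq ?_)
    ring
  have hGsum : Summable G := summable_sum hGs
  have hGt : ∑' i, G i ≤ 2 ^ A.card * Q := by
    simp only [hG]
    rw [Summable.tsum_finsetSum hGs]
    refine (Finset.sum_le_card_nsmul A.powerset _ Q fun B hB =>
      hQ B (Finset.mem_powerset.1 hB)).trans (le_of_eq ?_)
    rw [nsmul_eq_mul, Finset.card_powerset]; push_cast; rfl
  refine hle.trans ((Summable.tsum_le_tsum hpt hs (hGsum.mul_left _)).trans ?_)
  rw [tsum_mul_left]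
  refine (mul_le_mul_of_nonneg_left hGt (by positivity)).trans (le_of_eq ?_)
  field_simp

lemma count_a (hp0 : 0 < p) (hp1 : p < 1) (hb : IsLpBasis p x xs) {b : ℝ} (hb0 : 0 ≤ b)
    (hev : ∀ n i, |xs n (ev i)| ≤ b) (A : Finset ℕ) (σ : ℕ → ℝ) (hσ : ∀ n, |σ n| = 1) {Q : ℝ}
    (hQ : ∀ B ⊆ A, qn p (fun j => ∑ n ∈ B, σ n * x n j) ≤ Q) :
    (A.card : ℝ) ≤ (6 * b * Q ^ (1 / p)) ^ 2 := by
  obtain ⟨hs, hle⟩ := card_le_tsum hp0 hp1 hb A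
  have hQ0 : 0 ≤ Q := (qn_nonneg _ _).trans (hQ A subset_rfl)
  set R := Q ^ (1 / p) with hR
  have hR0 : 0 ≤ R := by positivity
  have hl1 : ∀ B ⊆ A, ∑' i, |∑ n ∈ B, σ n * x n i| ≤ R := fun B hB =>
    (tsum_abs_le hp0 hp1 (mem_sum hp0 hp1 hb.mem σ B)).trans
      (Real.rpow_le_rpow (qn_nonneg _ _) (hQ B hB) (by positivity))
  have hsB : ∀ B : Finset ℕ, Summable fun i => |∑ n ∈ B, σ n * x n i| := fun B =>
    summable_abs_of_mem hp0 hp1 (mem_sum hp0 hp1 hb.mem σ B)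
  set H : Finset ℕ → ℕ → ℝ := fun B i =>
    2 * |∑ n ∈ B, σ n * x n i| + |∑ n ∈ A, σ n * x n i| with hH
  have hHs : ∀ B ∈ A.powerset, Summable (H B) := fun B _ =>
    ((hsB B).mul_left 2).add (hsB A)
  have hHt : ∀ B ∈ A.powerset, ∑' i, H B i ≤ 3 * R := by
    intro B hB
    simp only [hH]
    rw [Summable.tsum_add ((hsB B).mul_left 2) (hsB A), tsum_mul_left]
    have := hl1 B (Finset.mem_powerset.1 hB)
    have := hl1 A subset_rfl
    linarith
  have hpt : ∀ i, ∑ n ∈ A, |x n i| * |xs n (ev i)| ≤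
      (b * (2 * √A.card) / 2 ^ A.card) * ∑ B ∈ A.powerset, H B i := by
    intro i
    have e1 : ∑ n ∈ A, |x n i| * |xs n (ev i)| ≤ b * ∑ n ∈ A, |x n i| := by
      rw [Finset.mul_sum]
      refine Finset.sum_le_sum fun n _ => ?_
      rw [mul_comm]
      exact mul_le_mul_of_nonneg_right (hev n i) (abs_nonneg _)
    have e2 := kh (fun n => σ n * x n i) A
    simp only [abs_mul (σ _), hσ, one_mul] at e2
    have e3 : ∑ B ∈ A.powerset, |2 * ∑ n ∈ B, σ n * x n i - ∑ n ∈ A, σ n * x n i| ≤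
        ∑ B ∈ A.powerset, H B i := by
      refine Finset.sum_le_sum fun B _ => ?_
      refine (abs_sub _ _).trans ?_
      rw [abs_mul, abs_two]
    have e4 : ∑ n ∈ A, |x n i| ≤ 2 * √A.card * (∑ B ∈ A.powerset, H B i) / 2 ^ A.card := by
      rw [le_div_iff₀ (by positivity), mul_comm]
      refine e2.trans ?_
      gcongr
    refine e1.trans ((mul_le_mul_of_nonneg_left e4 hb0).trans (le_of_eq ?_))
    ring
  have key : (A.card : ℝ) ≤ √A.card * (6 * b * R) := by
    refine hle.trans ((Summable.tsum_le_tsum hpt hs ((summable_sum hHs).mul_left _)).trans ?_)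
    rw [tsum_mul_left, Summable.tsum_finsetSum hHs]
    have : ∑ B ∈ A.powerset, ∑' i, H B i ≤ 2 ^ A.card * (3 * R) := by
      refine (Finset.sum_le_card_nsmul A.powerset _ (3 * R) hHt).trans (le_of_eq ?_)
      rw [nsmul_eq_mul, Finset.card_powerset]; push_cast; rfl
    refine (mul_le_mul_of_nonneg_left this (by positivity)).trans (le_of_eq ?_)
    field_simp; ring
  have hm : √(A.card : ℝ) * √(A.card : ℝ) = A.card := Real.mul_self_sqrt (by positivity)
  rcases (Real.sqrt_nonneg (A.card : ℝ)).eq_or_lt with h | h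
  · rw [← hm, ← h]; simp; positivity
  · have : √(A.card : ℝ) ≤ 6 * b * R := by
      refine le_of_mul_le_mul_left ?_ h
      rw [hm]; exact key
    nlinarith

end final

/-- For a quasi-greedy basis of `ℓ_p`, `0<p<1`, the coefficient transform maps
`ℓ_p` boundedly into `ℓ_1`. -/
theorem stmt5 (p : ℝ) (hp0 : 0 < p) (hp1 : p < 1)
    (x : ℕ → ℕ → ℝ) (xs : ℕ → (ℕ → ℝ) → ℝ)
    (hbasis : IsLpBasis p x xs) (hqg : QuasiGreedy p x xs) :
    ∃ C : ℝ, ∀ f, MemLpSeq p f → ∑' n, |xs n f| ≤ C * pNorm p f := by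
  obtain ⟨b, hb0, hbb⟩ := bdd_nonneg hbasis
  have hev : ∀ n i, |xs n (ev i)| ≤ b := by
    intro n i
    have := hbb n _ (mem_ev hp0 i)
    rwa [pNorm_eq, qn_ev hp0, Real.one_rpow, mul_one] at this
  obtain ⟨r, hr, M, hM, hlev⟩ := level hp0 hp1 hbasis hqg
  obtain ⟨N, hN⟩ := hbasis.norm_ub
  have hN0 : 0 ≤ N := (pNorm_nonneg p (x 0)).trans (hN 0)
  obtain ⟨C, hC0, hC⟩ := bootstrap (p := p) (r := r) (D := (6 * b * M ^ (1 / p)) ^ 2)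
    (M := 2 * N ^ (1 - p) * M) (T := b + 1) hp0 hp1 hr (by positivity) (by positivity)
    (by positivity) (fun n i => |xs n (ev i)|) (fun _ _ => abs_nonneg _)
    (fun n i => by have := hev n i; linarith)
    (by
      intro i t ht B hB
      obtain ⟨σ, hσ, hq⟩ := hlev (ev i) (mem_ev hp0 i) (qn_ev hp0 i).le t ht B hB
      refine (count_a hp0 hp1 hbasis hb0.le hev B σ hσ hq).trans (le_of_eq ?_)
      rw [Real.mul_rpow hM (by positivity), ← Real.rpow_mul ht.le, ← div_pow]
      have : -p * (1 / p) = -1 := by field_simp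
      rw [this, Real.rpow_neg_one]
      ring)
    (by
      intro i t ht B hB φ hφ
      obtain ⟨σ, hσ, hq⟩ := hlev (ev i) (mem_ev hp0 i) (qn_ev hp0 i).le t ht B hB
      refine (count_b hp0 hp1 hbasis hN B σ hσ hq hφ).trans (le_of_eq ?_)
      ring)
  refine ⟨C, fun f hf => ?_⟩
  refine Real.tsum_le_of_sum_le (fun _ => abs_nonneg _) fun F => ?_
  have hs : ∀ n ∈ F, Summable fun i => |f i| * |xs n (ev i)| :=
    fun n _ => (expand hp0 hp1 hbasis n hf).1
  have hsf := summable_abs_of_mem hp0 hp1 hf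
  calc ∑ n ∈ F, |xs n f| ≤ ∑ n ∈ F, ∑' i, |f i| * |xs n (ev i)| :=
        Finset.sum_le_sum fun n _ => (expand hp0 hp1 hbasis n hf).2
    _ = ∑' i, ∑ n ∈ F, |f i| * |xs n (ev i)| := (Summable.tsum_finsetSum hs).symm
    _ ≤ ∑' i, C * |f i| := by
        refine Summable.tsum_le_tsum (fun i => ?_) (summable_sum hs) (hsf.mul_left C)
        rw [← Finset.mul_sum, mul_comm]
        exact mul_le_mul_of_nonneg_right (hC i F) (abs_nonneg _)
    _ = C * ∑' i, |f i| := tsum_mul_left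
    _ ≤ C * pNorm p f := by
        have := tsum_abs_le hp0 hp1 hf
        gcongr
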